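/- Let 0<q<1 and 0<α<1. Then for every real z with 0<z<(1−q)^{−α}, one has 0 < e_{α,1}(−z;q) < 1. -/

import Mathlib

open scoped BigOperators

/-- The infinite q-Pochhammer symbol `(a;q)_∞ = ∏_{j=0}^∞ (1 - q^j a)`. -/
noncomputable def qPochInf (q a : ℝ) : ℝ := ∏' j : ℕ, (1 - q ^ j * a)

/-- The q-gamma function `Γ_q(x) = ((q;q)_∞/(q^x;q)_∞)·(1-q)^{1-x}`. -/
noncomputable def qGamma (q x : ℝ) : ℝ :=
  (qPochInf q q / qPochInf q (q ^ x)) * (1 - q) ^ (1 - x)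

/-- The q-Mittag-Leffler function `e_{α,β}(z;q) = ∑_{k=0}^∞ z^k/Γ_q(αk+β)`. -/
noncomputable def qML (q α β z : ℝ) : ℝ := ∑' k : ℕ, z ^ k / qGamma q (α * k + β)

/-!
Put `s = q ^ α`, `b = q ^ β` and `w = z (1 - q) ^ α ∈ (0, 1)`. Up to a positive constant,
`e_{α,β}(-z;q)` is `F(-w)` for the power series `F(x) = ∑ (b s ^ k; q)_∞ x ^ k`. Summing the
`q`-binomial theorem against `F` (which amounts to applying a fractional `q`-derivative) gives, with
`aⱼ = (s⁻¹;q)ⱼ / (q;q)ⱼ`,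
`∑ⱼ aⱼ b ^ j F(s ^ j x) = (b / s; q)_∞ + x F(x)`.
Here `a₀ = 1` and, as `q ≤ s < 1`, all further `aⱼ` are nonpositive. So along the sequence
`fₙ = F(-w s ^ n)`, whose limit is `(b;q)_∞`, the number `(1 + w s ^ n) fₙ` is a nonnegative
combination of `fₙ₊₁, fₙ₊₂, …` and of the limit, with total weight one. Positivity therefore
propagates from large `n` down to `n = 0`, and a maximum principle bounds `(1 + w s ^ n) fₙ` by the
limit.
-/

open Filter Finset Topology

section AveragingRecursion

variable {f c : ℕ → ℝ}

lemma forall_pos_of_hasSum_tail {u : ℕ → ℝ} {d : ℝ} (hf : ∀ᶠ n in atTop, 0 < f n)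
    (hc : ∀ j, 0 ≤ c j) (hc0 : 0 < c 0) (hu : ∀ n, 0 ≤ u n) (hd : 0 ≤ d)
    (hsum : ∀ n, HasSum (fun j => c j * f (n + 1 + j)) (u n * f n - d)) (n : ℕ) : 0 < f n := by
  obtain ⟨N, hN⟩ := eventually_atTop.1 hf
  suffices h : ∀ m ≥ 0, 0 < f m from h n n.zero_le
  refine Nat.decreasingInduction (motive := fun n _ => ∀ m ≥ n, 0 < f m) ?_ hN N.zero_le
  intro k _ ih m hm
  rcases hm.eq_or_lt with rfl | hkm
  · have htail : 0 < ∑' j, c j * f (k + 1 + j) :=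
      (hsum k).summable.tsum_pos (fun j => mul_nonneg (hc j) (ih _ (by omega)).le) 0
        (mul_pos hc0 (ih _ (by omega)))
    rw [(hsum k).tsum_eq] at htail
    exact pos_of_mul_pos_right (by linarith) (hu k)
  · exact ih m hkm

lemma one_add_mul_le_lim_of_hasSum_tail {w : ℕ → ℝ} {δ L : ℝ} (hf : Tendsto f atTop (𝓝 L))
    (hc : ∀ j, 0 ≤ c j) (hcsum : HasSum c (1 - δ)) (hw : ∀ n, 0 < w n) (hδ : 0 ≤ δ) (hL : 0 ≤ L)
    (hsum : ∀ n, HasSum (fun j => c j * f (n + 1 + j)) ((1 + w n) * f n - δ * L)) (n : ℕ) :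
    (1 + w n) * f n ≤ L := by
  have tail_le (m : ℕ) {M : ℝ} (hM : ∀ i, f i ≤ M) : (1 + w m) * f m - δ * L ≤ (1 - δ) * M :=
    hasSum_le (fun j => mul_le_mul_of_nonneg_left (hM _) (hc j)) (hsum m) (hcsum.mul_right M)
  have hle : ∀ m, f m ≤ L := by
    by_contra! ⟨m, hm⟩
    obtain ⟨p, hp⟩ : ∃ p, ∀ i, f i ≤ f p := by
      refine continuous_of_discreteTopology.exists_forall_ge' m ?_
      rw [cocompact_eq_atTop]
      exact (hf.eventually_lt_const hm).mono fun _ => le_of_lt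
    have hLp : L < f p := hm.trans_le (hp m)
    have hwp : 0 < w p * f p := mul_pos (hw p) (hL.trans_lt hLp)
    have hδp : δ * L ≤ δ * f p := mul_le_mul_of_nonneg_left hLp.le hδ
    linarith [tail_le p hp]
  linarith [tail_le n hle]

end AveragingRecursion

lemma abs_mul_lt_one {y z : ℝ} (hy : |y| ≤ 1) (hz : |z| < 1) : |y * z| < 1 := by
  rw [abs_mul]
  exact mul_lt_one_of_nonneg_of_lt_one_right hy (abs_nonneg z) hz

lemma abs_pow_mul_lt_one {y z : ℝ} (hy : |y| ≤ 1) (hz : |z| < 1) (n : ℕ) : |y ^ n * z| < 1 :=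
  abs_mul_lt_one (by rw [abs_pow]; exact pow_le_one₀ (abs_nonneg y) hy) hz

lemma tendsto_tsum_mul_pow_nhds_zero {a : ℕ → ℝ} {ρ : ℝ} (hρ : ρ ≠ 0)
    (ha : Summable fun k => a k * ρ ^ k) :
    Tendsto (fun x => ∑' k, a k * x ^ k) (𝓝 0) (𝓝 (a 0)) := by
  have hcont : ContinuousOn (fun x => ∑' k, a k * x ^ k) (Metric.closedBall 0 |ρ|) := by
    refine continuousOn_tsum (fun k => by fun_prop) ha.norm fun k x hx => ?_
    rw [norm_mul, norm_mul, norm_pow, norm_pow]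
    gcongr
    simpa using hx
  have hzero : ∑' k, a k * (0 : ℝ) ^ k = a 0 := by
    rw [tsum_eq_single 0 fun k hk => by simp [hk], pow_zero, mul_one]
  simpa only [hzero] using
    (hcont.continuousAt (Metric.closedBall_mem_nhds 0 (abs_pos.2 hρ))).tendsto

section QPochhammer

variable {q a : ℝ}

lemma summable_neg_pow_mul (hq : |q| < 1) (a : ℝ) : Summable fun j : ℕ => -(q ^ j * a) :=
  ((summable_geometric_of_abs_lt_one hq).mul_right a).neg

lemma tendsto_prod_range_qPochInf (hq : |q| < 1) (a : ℝ) :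
    Tendsto (fun n => ∏ j ∈ range n, (1 - q ^ j * a)) atTop (𝓝 (qPochInf q a)) := by
  simpa only [qPochInf, sub_eq_add_neg] using
    (Real.multipliable_one_add_of_summable (summable_neg_pow_mul hq a)).hasProd.tendsto_prod_nat

lemma one_sub_pow_mul_nonneg (hq0 : 0 ≤ q) (hq1 : q ≤ 1) (ha : a ≤ 1) (j : ℕ) :
    0 ≤ 1 - q ^ j * a :=
  sub_nonneg.2 ((mul_le_of_le_one_right (pow_nonneg hq0 j) ha).trans (pow_le_one₀ hq0 hq1))

lemma one_sub_pow_mul_pos (hq0 : 0 ≤ q) (hq1 : q ≤ 1) (ha : a < 1) (j : ℕ) :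
    0 < 1 - q ^ j * a := by
  rcases le_or_gt a 0 with ha0 | ha0
  · linarith [mul_nonpos_of_nonneg_of_nonpos (pow_nonneg hq0 j) ha0]
  · exact sub_pos.2 (mul_lt_one_of_nonneg_of_lt_one_right (pow_le_one₀ hq0 hq1) ha0.le ha)

lemma qPochInf_nonneg (hq0 : 0 ≤ q) (hq1 : q < 1) (ha : a ≤ 1) : 0 ≤ qPochInf q a :=
  ge_of_tendsto' (tendsto_prod_range_qPochInf ((abs_of_nonneg hq0).trans_lt hq1) a) fun _ =>
    prod_nonneg fun j _ => one_sub_pow_mul_nonneg hq0 hq1.le ha j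

lemma qPochInf_le_one (hq0 : 0 ≤ q) (hq1 : q < 1) (ha0 : 0 ≤ a) (ha1 : a ≤ 1) :
    qPochInf q a ≤ 1 :=
  le_of_tendsto' (tendsto_prod_range_qPochInf ((abs_of_nonneg hq0).trans_lt hq1) a) fun _ =>
    prod_le_one (fun j _ => one_sub_pow_mul_nonneg hq0 hq1.le ha1 j) fun j _ =>
      sub_le_self 1 (mul_nonneg (pow_nonneg hq0 j) ha0)

lemma qPochInf_pos (hq0 : 0 ≤ q) (hq1 : q < 1) (ha : a < 1) : 0 < qPochInf q a := by
  have hlog := Real.summable_log_one_add_of_summable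
    (summable_neg_pow_mul ((abs_of_nonneg hq0).trans_lt hq1) a)
  simp only [← sub_eq_add_neg] at hlog
  rw [qPochInf, ← Real.rexp_tsum_eq_tprod (one_sub_pow_mul_pos hq0 hq1.le ha) hlog]
  exact Real.exp_pos _

end QPochhammer

section QBinomial

/-- The coefficient `(a;q)_j / (q;q)_j` of `x ^ j` in the `q`-binomial series. -/
noncomputable def qBinomCoeff (q a : ℝ) (j : ℕ) : ℝ :=
  ∏ i ∈ range j, (1 - q ^ i * a) / (1 - q ^ (i + 1))

/-- The `q`-binomial series `₁φ₀(a; -; q, x) = ∑_j (a;q)_j / (q;q)_j x ^ j`. -/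
noncomputable def qBinomSeries (q a x : ℝ) : ℝ := ∑' j, qBinomCoeff q a j * x ^ j

variable {q x : ℝ}

lemma qBinomCoeff_zero (q a : ℝ) : qBinomCoeff q a 0 = 1 := by
  simp [qBinomCoeff]

lemma qBinomCoeff_succ (q a : ℝ) (j : ℕ) :
    qBinomCoeff q a (j + 1) = qBinomCoeff q a j * ((1 - q ^ j * a) / (1 - q ^ (j + 1))) :=
  prod_range_succ _ _

lemma one_sub_pow_succ_ne_zero (hq : |q| < 1) (j : ℕ) : 1 - q ^ (j + 1) ≠ 0 := by
  have h : |q ^ (j + 1)| < 1 := by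
    rw [abs_pow]
    exact pow_lt_one₀ (abs_nonneg q) hq j.succ_ne_zero
  exact (sub_pos.2 (abs_lt.1 h).2).ne'

lemma qBinomCoeff_succ_mul (hq : |q| < 1) (a : ℝ) (j : ℕ) :
    qBinomCoeff q a (j + 1) * (1 - q ^ (j + 1)) = qBinomCoeff q a j * (1 - q ^ j * a) := by
  rw [qBinomCoeff_succ, mul_assoc, div_mul_cancel₀ _ (one_sub_pow_succ_ne_zero hq j)]

lemma qBinomCoeff_one_neg {a : ℝ} (hq : q < 1) (ha : 1 < a) : qBinomCoeff q a 1 < 0 := by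
  simpa [qBinomCoeff] using div_neg_of_neg_of_pos (sub_neg.2 ha) (sub_pos.2 hq)

lemma qBinomCoeff_succ_nonpos {a : ℝ} (hq0 : 0 ≤ q) (hq1 : q < 1) (ha : 1 < a) (hqa : q * a ≤ 1)
    (j : ℕ) : qBinomCoeff q a (j + 1) ≤ 0 := by
  induction j with
  | zero => exact (qBinomCoeff_one_neg hq1 ha).le
  | succ j ih =>
    rw [qBinomCoeff_succ]
    refine mul_nonpos_of_nonpos_of_nonneg ih (div_nonneg ?_ ?_)
    · rw [pow_succ, mul_assoc]
      exact one_sub_pow_mul_nonneg hq0 hq1.le hqa j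
    · exact sub_nonneg.2 (pow_le_one₀ hq0 hq1.le)

lemma summable_qBinomCoeff_mul_pow (hq : |q| < 1) (a : ℝ) (hx : |x| < 1) :
    Summable fun j => qBinomCoeff q a j * x ^ j := by
  obtain ⟨ρ, hxρ, hρ1⟩ := exists_between hx
  have hpow : Tendsto (fun j => q ^ j) atTop (𝓝 0) := tendsto_pow_atTop_nhds_zero_of_abs_lt_one hq
  have hratio : Tendsto (fun j => |(1 - q ^ j * a) / (1 - q ^ (j + 1)) * x|) atTop (𝓝 |x|) := by
    simpa using ((((hpow.mul_const a).const_sub 1).div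
      (((tendsto_add_atTop_iff_nat 1).2 hpow).const_sub 1) (by norm_num)).mul_const x).abs
  refine summable_of_ratio_norm_eventually_le hρ1 ?_
  filter_upwards [hratio.eventually_le_const hxρ] with j hj
  calc ‖qBinomCoeff q a (j + 1) * x ^ (j + 1)‖
      = |(1 - q ^ j * a) / (1 - q ^ (j + 1)) * x| * ‖qBinomCoeff q a j * x ^ j‖ := by
        rw [← Real.norm_eq_abs, ← norm_mul, qBinomCoeff_succ]
        congr 1
        ring
    _ ≤ ρ * ‖qBinomCoeff q a j * x ^ j‖ := by gcongr

lemma hasSum_qBinomSeries (hq : |q| < 1) (a : ℝ) (hx : |x| < 1) :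
    HasSum (fun j => qBinomCoeff q a j * x ^ j) (qBinomSeries q a x) :=
  (summable_qBinomCoeff_mul_pow hq a hx).hasSum

lemma one_sub_mul_qBinomSeries (hq : |q| < 1) (a : ℝ) (hx : |x| < 1) :
    (1 - x) * qBinomSeries q a x = (1 - a * x) * qBinomSeries q a (q * x) := by
  have hφ := hasSum_qBinomSeries hq a hx
  have hφq := hasSum_qBinomSeries hq a (abs_mul_lt_one hq.le hx)
  have hdiff : HasSum (fun j => qBinomCoeff q a (j + 1) * (1 - q ^ (j + 1)) * x ^ (j + 1))
      (qBinomSeries q a x - qBinomSeries q a (q * x)) := by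
    have h := (hasSum_nat_add_iff' 1).2 (hφ.sub hφq)
    simp only [range_one, sum_singleton, pow_zero, sub_self, sub_zero] at h
    exact h.congr_fun fun j => by ring
  have hshift : HasSum (fun j => qBinomCoeff q a j * (1 - q ^ j * a) * x ^ (j + 1))
      (x * qBinomSeries q a x - a * x * qBinomSeries q a (q * x)) :=
    ((hφ.mul_left x).sub (hφq.mul_left (a * x))).congr_fun fun j => by ring
  simp only [qBinomCoeff_succ_mul hq] at hdiff
  linear_combination hdiff.unique hshift

lemma qBinomSeries_mul_prod_range (hq : |q| < 1) (a : ℝ) (hx : |x| < 1) (n : ℕ) :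
    qBinomSeries q a x * ∏ j ∈ range n, (1 - q ^ j * x) =
      (∏ j ∈ range n, (1 - q ^ j * (a * x))) * qBinomSeries q a (q ^ n * x) := by
  induction n with
  | zero => simp
  | succ n ih =>
    have hstep := one_sub_mul_qBinomSeries hq a (abs_pow_mul_lt_one hq.le hx n)
    rw [mul_left_comm a, ← mul_assoc q, ← pow_succ'] at hstep
    rw [prod_range_succ, prod_range_succ, ← mul_assoc, ih]
    linear_combination (∏ j ∈ range n, (1 - q ^ j * (a * x))) * hstep

theorem qBinomSeries_mul_qPochInf (hq : |q| < 1) (a : ℝ) (hx : |x| < 1) :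
    qBinomSeries q a x * qPochInf q x = qPochInf q (a * x) := by
  have hpow : Tendsto (fun n => q ^ n * x) atTop (𝓝 0) := by
    simpa using (tendsto_pow_atTop_nhds_zero_of_abs_lt_one hq).mul_const x
  have hone : Tendsto (fun n => qBinomSeries q a (q ^ n * x)) atTop (𝓝 1) := by
    have h := tendsto_tsum_mul_pow_nhds_zero (ρ := 1 / 2) (by norm_num)
      (summable_qBinomCoeff_mul_pow hq a (by norm_num [abs_lt]))
    rw [qBinomCoeff_zero] at h
    exact h.comp hpow
  have hlim := (tendsto_prod_range_qPochInf hq (a * x)).mul hone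
  simp only [← qBinomSeries_mul_prod_range hq a hx, mul_one] at hlim
  exact tendsto_nhds_unique ((tendsto_prod_range_qPochInf hq x).const_mul _) hlim

end QBinomial

section QPochSeries

/-- The power series `∑_k (b s ^ k; q)_∞ x ^ k`, which for `s = q ^ α`, `b = q ^ β` and
`x = z (1 - q) ^ α` is the `q`-Mittag-Leffler function up to a constant factor. -/
noncomputable def qPochSeries (q s b x : ℝ) : ℝ := ∑' k : ℕ, qPochInf q (b * s ^ k) * x ^ k

variable {q s b x : ℝ}

lemma abs_qPochInf_mul_pow_le_one (hq0 : 0 ≤ q) (hq1 : q < 1) (hs0 : 0 ≤ s) (hs1 : s ≤ 1)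
    (hb0 : 0 ≤ b) (hb1 : b ≤ 1) (k : ℕ) : |qPochInf q (b * s ^ k)| ≤ 1 := by
  have hbs : b * s ^ k ≤ 1 := mul_le_one₀ hb1 (by positivity) (pow_le_one₀ hs0 hs1)
  rw [abs_of_nonneg (qPochInf_nonneg hq0 hq1 hbs)]
  exact qPochInf_le_one hq0 hq1 (by positivity) hbs

lemma hasSum_qPochSeries (hq0 : 0 ≤ q) (hq1 : q < 1) (hs0 : 0 ≤ s) (hs1 : s ≤ 1)
    (hb0 : 0 ≤ b) (hb1 : b ≤ 1) (hx : |x| < 1) :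
    HasSum (fun k => qPochInf q (b * s ^ k) * x ^ k) (qPochSeries q s b x) := by
  refine (Summable.of_norm_bounded
    (summable_geometric_of_lt_one (abs_nonneg x) hx) fun k => ?_).hasSum
  rw [norm_mul, norm_pow, Real.norm_eq_abs, Real.norm_eq_abs]
  exact mul_le_of_le_one_left (by positivity)
    (abs_qPochInf_mul_pow_le_one hq0 hq1 hs0 hs1 hb0 hb1 k)

lemma tendsto_qPochSeries_nhds_zero (hq0 : 0 ≤ q) (hq1 : q < 1) (hs0 : 0 ≤ s) (hs1 : s ≤ 1)
    (hb0 : 0 ≤ b) (hb1 : b ≤ 1) : Tendsto (qPochSeries q s b) (𝓝 0) (𝓝 (qPochInf q b)) := by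
  have h := tendsto_tsum_mul_pow_nhds_zero (ρ := 1 / 2) (by norm_num)
    (hasSum_qPochSeries hq0 hq1 hs0 hs1 hb0 hb1 (by norm_num [abs_lt])).summable
  rwa [pow_zero, mul_one] at h

lemma qPochSeries_eq_add_mul (hq0 : 0 ≤ q) (hq1 : q < 1) (hs0 : 0 ≤ s) (hs1 : s ≤ 1)
    (hb0 : 0 ≤ b) (hb1 : b ≤ 1) (hx : |x| < 1) :
    qPochSeries q s b x = qPochInf q b + x * qPochSeries q s (b * s) x := by
  rw [qPochSeries, (hasSum_qPochSeries hq0 hq1 hs0 hs1 hb0 hb1 hx).summable.tsum_eq_zero_add,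
    qPochSeries, ← tsum_mul_left, pow_zero, pow_zero, mul_one, mul_one]
  congr 1
  refine tsum_congr fun k => ?_
  rw [pow_succ', pow_succ', mul_assoc b]
  ring

lemma summable_qBinomCoeff_mul_qPochInf (hq0 : 0 ≤ q) (hq1 : q < 1) (hs0 : 0 ≤ s) (hs1 : s ≤ 1)
    (hb0 : 0 ≤ b) (hb1 : b < 1) (hx : |x| < 1) (a : ℝ) :
    Summable fun p : ℕ × ℕ =>
      qBinomCoeff q a p.1 * b ^ p.1 * (qPochInf q (b * s ^ p.2) * (s ^ p.1 * x) ^ p.2) := by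
  have hcoeff := summable_qBinomCoeff_mul_pow ((abs_of_nonneg hq0).trans_lt hq1) a
    ((abs_of_nonneg hb0).trans_lt hb1)
  refine Summable.of_norm_bounded (hcoeff.norm.mul_of_nonneg
    (summable_geometric_of_lt_one (abs_nonneg x) hx) (fun _ => norm_nonneg _)
    fun k => by positivity) ?_
  rintro ⟨j, k⟩
  rw [norm_mul, norm_mul (qPochInf _ _), norm_pow, norm_mul (s ^ j), Real.norm_eq_abs x,
    Real.norm_of_nonneg (pow_nonneg hs0 j)]
  gcongr
  calc |qPochInf q (b * s ^ k)| * (s ^ j * |x|) ^ k ≤ 1 * (1 * |x|) ^ k := by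
        gcongr
        · exact abs_qPochInf_mul_pow_le_one hq0 hq1 hs0 hs1 hb0 hb1.le k
        · exact pow_le_one₀ hs0 hs1
    _ = |x| ^ k := by rw [one_mul, one_mul]

lemma hasSum_qBinomCoeff_mul_qPochSeries (hq0 : 0 ≤ q) (hq1 : q < 1) (hs0 : 0 ≤ s) (hs1 : s ≤ 1)
    (hb0 : 0 ≤ b) (hb1 : b < 1) (hx : |x| < 1) (a : ℝ) :
    HasSum (fun j => qBinomCoeff q a j * b ^ j * qPochSeries q s b (s ^ j * x))
      (qPochSeries q s (a * b) x) := by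
  have hq : |q| < 1 := (abs_of_nonneg hq0).trans_lt hq1
  have hs : |s| ≤ 1 := (abs_of_nonneg hs0).trans_le hs1
  have hb : |b| < 1 := (abs_of_nonneg hb0).trans_lt hb1
  have hdouble := (summable_qBinomCoeff_mul_qPochInf hq0 hq1 hs0 hs1 hb0 hb1 hx a).hasSum
  have hrows (j : ℕ) := (hasSum_qPochSeries hq0 hq1 hs0 hs1 hb0 hb1.le
    (abs_pow_mul_lt_one hs hx j)).mul_left (qBinomCoeff q a j * b ^ j)
  have hcols (k : ℕ) : HasSum
      (fun j => qBinomCoeff q a j * b ^ j * (qPochInf q (b * s ^ k) * (s ^ j * x) ^ k))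
      (qPochInf q (a * b * s ^ k) * x ^ k) := by
    have hbs : |b * s ^ k| < 1 := by
      rw [mul_comm]
      exact abs_pow_mul_lt_one hs hb k
    rw [mul_assoc a, ← qBinomSeries_mul_qPochInf hq a hbs, mul_assoc]
    refine ((hasSum_qBinomSeries hq a hbs).mul_right _).congr_fun fun j => ?_
    rw [mul_pow b, mul_pow _ x, ← pow_mul, ← pow_mul, mul_comm k j]
    ring
  have hswap := ((Equiv.prodComm ℕ ℕ).hasSum_iff.2 hdouble).prod_fiberwise hcols
  rw [qPochSeries, hswap.tsum_eq]
  exact hdouble.prod_fiberwise hrows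

/-- The weights of the averaging recursion for `qPochSeries`: the coefficients, with reversed sign,
of the `q`-binomial series `₁φ₀(s⁻¹; -; q, b)` beyond the constant one. -/
noncomputable def qTailWeight (q s b : ℝ) (j : ℕ) : ℝ :=
  -(qBinomCoeff q s⁻¹ (j + 1) * b ^ (j + 1))

lemma qTailWeight_nonneg (hq0 : 0 ≤ q) (hqs : q ≤ s) (hs0 : 0 < s) (hs1 : s < 1) (hb0 : 0 ≤ b)
    (j : ℕ) : 0 ≤ qTailWeight q s b j :=
  neg_nonneg.2 <| mul_nonpos_of_nonpos_of_nonneg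
    (qBinomCoeff_succ_nonpos hq0 (hqs.trans_lt hs1) ((one_lt_inv₀ hs0).2 hs1)
      (mul_inv_le_one_of_le₀ hqs hs0.le) j)
    (pow_nonneg hb0 _)

lemma qTailWeight_zero_pos (hq1 : q < 1) (hs0 : 0 < s) (hs1 : s < 1) (hb0 : 0 < b) :
    0 < qTailWeight q s b 0 :=
  neg_pos.2 <| mul_neg_of_neg_of_pos (qBinomCoeff_one_neg hq1 ((one_lt_inv₀ hs0).2 hs1))
    (pow_pos hb0 _)

lemma hasSum_qTailWeight (hq : |q| < 1) (s : ℝ) (hb : |b| < 1) :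
    HasSum (qTailWeight q s b) (1 - qBinomSeries q s⁻¹ b) := by
  have h := ((hasSum_nat_add_iff' 1).2 (hasSum_qBinomSeries hq s⁻¹ hb)).neg
  rwa [sum_range_one, qBinomCoeff_zero, pow_zero, mul_one, neg_sub] at h

lemma hasSum_qTailWeight_mul_qPochSeries (hq0 : 0 ≤ q) (hq1 : q < 1) (hs0 : 0 < s) (hs1 : s ≤ 1)
    (hb0 : 0 ≤ b) (hb1 : b < 1) (hbs : b ≤ s) (hx : |x| < 1) :
    HasSum (fun j => qTailWeight q s b j * qPochSeries q s b (s ^ (j + 1) * x))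
      ((1 - x) * qPochSeries q s b x - qPochInf q (s⁻¹ * b)) := by
  have hbs1 : s⁻¹ * b ≤ 1 := inv_mul_le_one_of_le₀ hbs hs0.le
  have hrec := qPochSeries_eq_add_mul hq0 hq1 hs0.le hs1 (by positivity) hbs1 hx
  rw [mul_right_comm, inv_mul_cancel₀ hs0.ne', one_mul] at hrec
  have hvalue : (1 - x) * qPochSeries q s b x - qPochInf q (s⁻¹ * b) =
      -(qPochSeries q s (s⁻¹ * b) x - qPochSeries q s b x) := by
    linear_combination hrec
  have htail := ((hasSum_nat_add_iff' 1).2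
    (hasSum_qBinomCoeff_mul_qPochSeries hq0 hq1 hs0.le hs1 hb0 hb1 hx s⁻¹)).neg
  rw [sum_range_one, qBinomCoeff_zero, pow_zero, pow_zero, one_mul, one_mul, one_mul] at htail
  rw [hvalue]
  exact htail.congr_fun fun j => neg_mul _ _

lemma hasSum_qTailWeight_mul_qPochSeries_pow_mul_neg (hq0 : 0 ≤ q) (hq1 : q < 1) (hs0 : 0 < s)
    (hs1 : s ≤ 1) (hb0 : 0 ≤ b) (hb1 : b < 1) (hbs : b ≤ s) (hx : |x| < 1) (n : ℕ) :
    HasSum (fun j => qTailWeight q s b j * qPochSeries q s b (s ^ (n + 1 + j) * -x))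
      ((1 + s ^ n * x) * qPochSeries q s b (s ^ n * -x) - qPochInf q (s⁻¹ * b)) := by
  have hsn : |s ^ n * -x| < 1 :=
    abs_pow_mul_lt_one ((abs_of_pos hs0).trans_le hs1) (by rwa [abs_neg]) n
  rw [← sub_neg_eq_add, ← mul_neg]
  refine (hasSum_qTailWeight_mul_qPochSeries
    hq0 hq1 hs0 hs1 hb0 hb1 hbs hsn).congr_fun fun j => ?_
  rw [← mul_assoc, ← pow_add, add_right_comm, add_comm n, add_right_comm]

theorem qPochSeries_neg_mem_Ioo (hq0 : 0 ≤ q) (hqs : q ≤ s) (hs0 : 0 < s) (hs1 : s < 1)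
    (hb0 : 0 < b) (hbs : b ≤ s) (hx0 : 0 < x) (hx1 : x < 1) :
    qPochSeries q s b (-x) ∈ Set.Ioo 0 (qPochInf q b) := by
  have hq1 : q < 1 := hqs.trans_lt hs1
  have hb1 : b < 1 := hbs.trans_lt hs1
  have hq : |q| < 1 := (abs_of_nonneg hq0).trans_lt hq1
  have hb : |b| < 1 := (abs_of_pos hb0).trans_lt hb1
  have hx : |x| < 1 := (abs_of_pos hx0).trans_lt hx1
  have hL : 0 < qPochInf q b := qPochInf_pos hq0 hq1 hb1
  set δ := qBinomSeries q s⁻¹ b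
  have hδL : δ * qPochInf q b = qPochInf q (s⁻¹ * b) :=
    qBinomSeries_mul_qPochInf hq s⁻¹ hb
  have hδL0 : 0 ≤ δ * qPochInf q b :=
    hδL ▸ qPochInf_nonneg hq0 hq1 (inv_mul_le_one_of_le₀ hbs hs0.le)
  set f : ℕ → ℝ := fun n => qPochSeries q s b (s ^ n * -x)
  have hf : Tendsto f atTop (𝓝 (qPochInf q b)) := by
    refine (tendsto_qPochSeries_nhds_zero hq0 hq1 hs0.le hs1.le hb0.le hb1.le).comp ?_
    simpa using (tendsto_pow_atTop_nhds_zero_of_lt_one hs0.le hs1).mul_const (-x)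
  have hsum (n : ℕ) : HasSum (fun j => qTailWeight q s b j * f (n + 1 + j))
      ((1 + s ^ n * x) * f n - δ * qPochInf q b) := by
    rw [hδL]
    exact hasSum_qTailWeight_mul_qPochSeries_pow_mul_neg hq0 hq1 hs0 hs1.le hb0.le hb1 hbs hx n
  have hc := qTailWeight_nonneg hq0 hqs hs0 hs1 hb0.le
  have hpos : 0 < f 0 :=
    forall_pos_of_hasSum_tail (hf.eventually_const_lt hL) hc (qTailWeight_zero_pos hq1 hs0 hs1 hb0)
      (fun n => by positivity) hδL0 hsum 0
  have hle : (1 + s ^ 0 * x) * f 0 ≤ qPochInf q b :=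
    one_add_mul_le_lim_of_hasSum_tail hf hc
      (hasSum_qTailWeight hq s hb)
      (fun n => by positivity) (nonneg_of_mul_nonneg_left hδL0 hL) hL.le hsum 0
  have hf0 : f 0 = qPochSeries q s b (-x) := by simp only [f, pow_zero, one_mul]
  rw [pow_zero, one_mul] at hle
  rw [← hf0]
  exact ⟨hpos, by linarith [mul_pos hx0 hpos]⟩

end QPochSeries

section QMittagLeffler

variable {q : ℝ}

lemma inv_qGamma (hq : q ≤ 1) (x : ℝ) :
    (qGamma q x)⁻¹ = (1 - q) ^ (x - 1) / qPochInf q q * qPochInf q (q ^ x) := by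
  rw [qGamma, mul_inv, inv_div, ← Real.rpow_neg (sub_nonneg.2 hq), neg_sub]
  ring

lemma qGamma_one (hq0 : 0 ≤ q) (hq1 : q < 1) : qGamma q 1 = 1 := by
  simp [qGamma, (qPochInf_pos hq0 hq1 hq1).ne']

lemma qML_eq_mul_qPochSeries (hq0 : 0 < q) (hq1 : q < 1) (α β z : ℝ) :
    qML q α β z = (1 - q) ^ (β - 1) / qPochInf q q *
      qPochSeries q (q ^ α) (q ^ β) ((1 - q) ^ α * z) := by
  have hq : 0 < 1 - q := sub_pos.2 hq1
  rw [qML, qPochSeries, ← tsum_mul_left]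
  refine tsum_congr fun k => ?_
  have hbase : q ^ (α * k + β) = q ^ β * (q ^ α) ^ k := by
    rw [Real.rpow_add hq0, Real.rpow_mul_natCast hq0.le, mul_comm]
  have hscale : (1 - q) ^ (α * k + β - 1) = (1 - q) ^ (β - 1) * ((1 - q) ^ α) ^ k := by
    rw [add_sub_assoc, Real.rpow_add hq, Real.rpow_mul_natCast hq.le, mul_comm]
  rw [div_eq_mul_inv, inv_qGamma hq1.le, hbase, hscale, mul_pow]
  ring

theorem qML_between_zero_and_one_general {α β z : ℝ} (hq0 : 0 < q) (hq1 : q < 1) (hα0 : 0 < α)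
    (hα1 : α ≤ 1) (hαβ : α ≤ β) (hz0 : 0 < z) (hz1 : z < (1 - q) ^ (-α)) :
    0 < qML q α β (-z) ∧ qML q α β (-z) < (qGamma q β)⁻¹ := by
  have hq : 0 < 1 - q := sub_pos.2 hq1
  have hscale : 0 < (1 - q) ^ α := Real.rpow_pos_of_pos hq α
  have hfactor : 0 < (1 - q) ^ (β - 1) / qPochInf q q :=
    div_pos (Real.rpow_pos_of_pos hq _) (qPochInf_pos hq0.le hq1 hq1)
  have hqα : q ≤ q ^ α := by simpa using Real.rpow_le_rpow_of_exponent_ge hq0 hq1.le hα1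
  have hw1 : (1 - q) ^ α * z < 1 := by
    rwa [Real.rpow_neg hq.le, ← one_div, lt_div_iff₀' hscale] at hz1
  obtain ⟨hpos, hlt⟩ := qPochSeries_neg_mem_Ioo hq0.le hqα (Real.rpow_pos_of_pos hq0 α)
    (Real.rpow_lt_one hq0.le hq1 hα0) (Real.rpow_pos_of_pos hq0 β)
    (Real.rpow_le_rpow_of_exponent_ge hq0 hq1.le hαβ) (mul_pos hscale hz0) hw1
  rw [qML_eq_mul_qPochSeries hq0 hq1, inv_qGamma hq1.le, mul_neg]
  exact ⟨mul_pos hfactor hpos, mul_lt_mul_of_pos_left hlt hfactor⟩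

end QMittagLeffler

theorem qML_between_zero_and_one (q α : ℝ) (hq0 : 0 < q) (hq1 : q < 1)
    (hα0 : 0 < α) (hα1 : α < 1) :
    ∀ z : ℝ, 0 < z → z < (1 - q) ^ (-α) →
      0 < qML q α 1 (-z) ∧ qML q α 1 (-z) < 1 := by
  intro z hz0 hz1
  simpa only [qGamma_one hq0.le hq1, inv_one] using
    qML_between_zero_and_one_general hq0 hq1 hα0 hα1.le hα1.le hz0 hz1
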